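/- arXiv:1708.04579 — 2 statements merged into one kernel-verified Lean document; each statement's English description precedes it below -/
import Mathlib

section
/- Let f : ℤⁿ → ℝ ∪ {+∞} be a globally or locally discrete midpoint convex function with argmin f ≠ ∅, let x⁽⁰⁾ ∈ dom f \ argmin f, let L = min{‖x − x⁽⁰⁾‖∞ : x ∈ argmin f}, and for an integer k let S_k = {x ∈ ℤⁿ : ‖x − x⁽⁰⁾‖∞ ≤ k}. Then for every integer k with 3 ≤ k ≤ L and every x' minimizing f over S_{k−1}, there exists x'' minimizing f over S_k with ‖x'' − x'‖∞ ≤ 2. -/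
/-- The ℓ∞-norm of an integer vector, as a natural number. -/
def linf {n : ℕ} (z : Fin n → ℤ) : ℕ :=
  Finset.univ.sup fun i => (z i).natAbs

/-- Componentwise round-up of (x+y)/2. -/
def avgUp {n : ℕ} (x y : Fin n → ℤ) : Fin n → ℤ :=
  fun i => ⌈((x i + y i : ℚ)) / 2⌉

/-- Componentwise round-down of (x+y)/2. -/
def avgDown {n : ℕ} (x y : Fin n → ℤ) : Fin n → ℤ :=
  fun i => ⌊((x i + y i : ℚ)) / 2⌋

/-- A set `S ⊆ ℤⁿ` is discrete midpoint convex. -/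
def DMCSet {n : ℕ} (S : Set (Fin n → ℤ)) : Prop :=
  ∀ ⦃x⦄, x ∈ S → ∀ ⦃y⦄, y ∈ S → 2 ≤ linf (x - y) →
    avgUp x y ∈ S ∧ avgDown x y ∈ S

/-- `f` satisfies discrete midpoint convexity for the pair `(x, y)`.
Values are in `ℝ ∪ {+∞}`, modeled as `WithTop ℝ`. -/
def DMCPair {n : ℕ} (f : (Fin n → ℤ) → WithTop ℝ) (x y : Fin n → ℤ) : Prop :=
  f (avgUp x y) + f (avgDown x y) ≤ f x + f y

/-- `f` is globally discrete midpoint convex. -/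
def GloballyDMC {n : ℕ} (f : (Fin n → ℤ) → WithTop ℝ) : Prop :=
  ∀ x y : Fin n → ℤ, 2 ≤ linf (x - y) → DMCPair f x y

/-- The effective domain of `f`. -/
def effDom {n : ℕ} (f : (Fin n → ℤ) → WithTop ℝ) : Set (Fin n → ℤ) :=
  {x | f x ≠ ⊤}

/-- `f` is locally discrete midpoint convex. -/
def LocallyDMC {n : ℕ} (f : (Fin n → ℤ) → WithTop ℝ) : Prop :=
  DMCSet (effDom f) ∧ ∀ x y : Fin n → ℤ, linf (x - y) = 2 → DMCPair f x y

/-!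
Write `y - x`, with `‖y - x‖∞ = m`, as a sum `s₁ + ⋯ + s_m` of vectors with entries in `{-1, 0, 1}`
that is nondecreasing in every coordinate. If `x, y ∈ dom f`, repeated halving shows that
`x + s₁ ∈ dom f`, and by symmetry `y - s_m ∈ dom f`. Removing `s_m` and applying midpoint convexity
to pairs at distance two then gives, by induction on `m`, the parallelogram inequality
`f (x + s_j) + f (y - s_j) ≤ f x + f y` for each `j`.

Let `x'` minimize `f` over a box, and among the minimizers over a box larger by at most one in each
direction let `y` be nearest to `x'`. If `m = ‖y - x'‖∞ ≥ 3`, the step `s₂` vanishes wherever `y`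
and `x'` differ by at most one, so `x' + s₂` stays in the smaller box. Hence
`f x' ≤ f (x' + s₂)`, the parallelogram inequality yields `f (y - s₂) ≤ f y`, and `y - s₂` is a
minimizer closer to `x'`.
-/

section Averages

variable {n : ℕ} (x y : Fin n → ℤ) (i : Fin n)

theorem avgUp_apply : avgUp x y i = -(-(x i + y i) / 2) := by
  simpa [avgUp] using Rat.ceil_intCast_div_natCast (x i + y i) 2

theorem avgDown_apply : avgDown x y i = (x i + y i) / 2 := by
  simpa [avgDown] using Rat.floor_intCast_div_natCast (x i + y i) 2

variable {u v : Fin n → ℤ}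

theorem avgUp_sub_sub_self (huv : u ≤ v) (hvu : v ≤ u + 1) : avgUp (y - v - u) y = y - u := by
  funext i
  have hle : u i ≤ v i := huv i
  have hge : v i ≤ u i + 1 := hvu i
  simp only [avgUp_apply, Pi.sub_apply]
  omega

theorem avgDown_sub_sub_self (huv : u ≤ v) (hvu : v ≤ u + 1) : avgDown (y - v - u) y = y - v := by
  funext i
  have hle : u i ≤ v i := huv i
  have hge : v i ≤ u i + 1 := hvu i
  simp only [avgDown_apply, Pi.sub_apply]
  omega

end Averages

section Linf

variable {n m : ℕ} {z : Fin n → ℤ}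

theorem linf_le_iff : linf z ≤ m ↔ ∀ i, (z i).natAbs ≤ m := by
  simp only [linf, Finset.sup_le_iff, Finset.mem_univ, true_imp_iff]

theorem le_linf_iff (hm : 0 < m) : m ≤ linf z ↔ ∃ i, m ≤ (z i).natAbs := by
  simp only [linf, Finset.le_sup_iff hm, Finset.mem_univ, true_and]

theorem linf_eq_iff (hm : 0 < m) :
    linf z = m ↔ (∀ i, (z i).natAbs ≤ m) ∧ ∃ i, m ≤ (z i).natAbs := by
  rw [le_antisymm_iff, linf_le_iff, le_linf_iff hm]

theorem linf_sub_comm (x y : Fin n → ℤ) : linf (x - y) = linf (y - x) := by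
  rw [← neg_sub y x]
  simp only [linf, Pi.neg_apply, Int.natAbs_neg]

theorem setOf_linf_sub_le (c : Fin n → ℤ) (k : ℕ) :
    {x | linf (x - c) ≤ k} = Set.Icc (c - k) (c + k) := by
  ext x
  simp only [Set.mem_ofPred_eq, linf_le_iff, Set.mem_Icc, Pi.le_def, ← forall_and, Pi.sub_apply,
    Pi.add_apply, Pi.natCast_apply]
  exact forall_congr' fun i => by omega

end Linf

/-- The `j`-th step, `1 ≤ j ≤ m`, of the decomposition of `y - x`, where `‖y - x‖∞ ≤ m`, into a
nondecreasing sum of `m` vectors with entries in `{-1, 0, 1}`: an entry `d ≥ 0` of `y - x` is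
`0 + ⋯ + 0 + 1 + ⋯ + 1`, and an entry `d ≤ 0` is `-1 - ⋯ - 1 + 0 + ⋯ + 0`. -/
def unitStep {n : ℕ} (m j : ℕ) (x y : Fin n → ℤ) : Fin n → ℤ := fun i =>
  if (m : ℤ) + 1 - j ≤ y i - x i then 1 else if y i - x i ≤ -j then -1 else 0

namespace unitStep

variable {n m i j : ℕ} {x y : Fin n → ℤ}

theorem swap (hij : i + j = m + 1) : unitStep m i y x = -unitStep m j x y := by
  funext t
  simp only [unitStep, Pi.neg_apply]
  split_ifs <;> omega

theorem mono (hij : i ≤ j) : unitStep m i x y ≤ unitStep m j x y := by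
  intro t
  simp only [unitStep]
  split_ifs <;> omega

theorem le_add_one (hi : 1 ≤ i) (hjm : j ≤ m) : unitStep m j x y ≤ unitStep m i x y + 1 := by
  intro t
  simp only [unitStep, Pi.add_apply, Pi.one_apply]
  split_ifs <;> omega

theorem linf_add (hi : 1 ≤ i) (him : i ≤ m) (hj : 1 ≤ j) (hjm : j ≤ m) (hxy : linf (y - x) = m) :
    linf (unitStep m i x y + unitStep m j x y) = 2 := by
  obtain ⟨-, t, ht⟩ := (linf_eq_iff (by omega)).1 hxy
  refine (linf_eq_iff two_pos).2 ⟨fun t => ?_, t, ?_⟩ <;>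
    simp only [unitStep, Pi.add_apply, Pi.sub_apply] at ht ⊢ <;> split_ifs <;> omega

theorem add_eq (hxy : linf (y - x) = 1) : x + unitStep 1 1 x y = y := by
  funext t
  have hle := linf_le_iff.1 hxy.le t
  simp only [unitStep, Pi.add_apply, Pi.sub_apply] at hle ⊢
  split_ifs <;> omega

theorem sub_mem_uIcc (hj : 1 ≤ j) (hjm : j ≤ m) : y - unitStep m j x y ∈ Set.uIcc x y := by
  constructor <;> intro t <;> simp only [unitStep, Pi.sub_apply, Pi.inf_apply, Pi.sup_apply] <;>
    split_ifs <;> omega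

theorem linf_sub_sub (hm : 0 < m) (hj : 1 ≤ j) (hjm : j ≤ m + 1) (hxy : linf (y - x) = m + 1) :
    linf (y - unitStep (m + 1) j x y - x) = m := by
  obtain ⟨hle, t, ht⟩ := (linf_eq_iff m.succ_pos).1 hxy
  refine (linf_eq_iff hm).2 ⟨fun t => ?_, t, ?_⟩
  · have := hle t
    simp only [unitStep, Pi.sub_apply] at this ⊢
    split_ifs <;> omega
  · simp only [unitStep, Pi.sub_apply] at ht ⊢
    split_ifs <;> omega

theorem sub_last (hj : 1 ≤ j) (hjm : j ≤ m) :
    unitStep m j x (y - unitStep (m + 1) (m + 1) x y) = unitStep (m + 1) j x y := by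
  funext t
  simp only [unitStep, Pi.sub_apply]
  split_ifs <;> omega

theorem add_two_mem_Icc {a b : Fin n → ℤ} (hm : 3 ≤ m) (hx : x ∈ Set.Icc a b)
    (hy : y ∈ Set.Icc (a - 1) (b + 1)) : x + unitStep m 2 x y ∈ Set.Icc a b := by
  have hcoord : ∀ t, a t ≤ (x + unitStep m 2 x y) t ∧ (x + unitStep m 2 x y) t ≤ b t := fun t => by
    have hax : a t ≤ x t := hx.1 t
    have hxb : x t ≤ b t := hx.2 t
    have hay : a t - 1 ≤ y t := hy.1 t
    have hyb : y t ≤ b t + 1 := hy.2 t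
    simp only [unitStep, Pi.add_apply]
    split_ifs <;> omega
  exact ⟨fun t => (hcoord t).1, fun t => (hcoord t).2⟩

end unitStep

section Halving

variable {n m : ℕ} {x y : Fin n → ℤ}

/-- For odd `m`, an entry `m` of `y - x` would round down to the same half as an entry `m - 1`, from
which the first step has to distinguish it. -/
theorem unitStep.avgDown_right (hm : Even m ∨ ∀ i, y i - x i ≠ m) (hxy : linf (y - x) = m) :
    unitStep ((m + 1) / 2) 1 x (avgDown x y) = unitStep m 1 x y := by
  funext i
  have hle := linf_le_iff.1 hxy.le i
  have hi : m % 2 = 0 ∨ y i - x i ≠ m := hm.imp Nat.even_iff.1 fun h => h i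
  simp only [unitStep, avgDown_apply, Pi.sub_apply] at hle ⊢
  split_ifs <;> omega

theorem linf_avgDown_sub (hm : Even m ∨ ∀ i, y i - x i ≠ m) (hpos : 0 < m)
    (hxy : linf (y - x) = m) : linf (avgDown x y - x) = (m + 1) / 2 := by
  obtain ⟨hle, i, hi⟩ := (linf_eq_iff hpos).1 hxy
  have hm' : m % 2 = 0 ∨ y i - x i ≠ m := hm.imp Nat.even_iff.1 fun h => h i
  refine (linf_eq_iff (by omega)).2 ⟨fun i => ?_, i, ?_⟩
  · have := hle i
    simp only [avgDown_apply, Pi.sub_apply] at this ⊢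
    omega
  · simp only [avgDown_apply, Pi.sub_apply] at hi ⊢
    omega

end Halving

namespace DMCSet

variable {n m q : ℕ} {S : Set (Fin n → ℤ)} {x y : Fin n → ℤ}

/-- Rounding up separates an entry `2 * q + 1` of `y - x` from an entry `2 * q`, but loses the
entries `-1`. So the first step `w` towards `avgUp x y` is wrong only at the entries `-1`, and
rounding the midpoint of `w` and `y` down recovers these. -/
theorem add_unitStep_one_mem_of_odd (hS : DMCSet S) (hq : 1 ≤ q)
    (ih : ∀ v ∈ S, linf (v - x) = q + 1 → x + unitStep (q + 1) 1 x v ∈ S)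
    (hx : x ∈ S) (hy : y ∈ S) (hxy : linf (y - x) = 2 * q + 1)
    {i₀ : Fin n} (hi₀ : y i₀ - x i₀ = 2 * q + 1) : x + unitStep (2 * q + 1) 1 x y ∈ S := by
  have hle : ∀ i, (y i - x i).natAbs ≤ 2 * q + 1 := linf_le_iff.1 hxy.le
  have hu : avgUp x y ∈ S := (hS hx hy (by rw [linf_sub_comm]; omega)).1
  have hux : linf (avgUp x y - x) = q + 1 := by
    refine (linf_eq_iff q.succ_pos).2 ⟨fun i => ?_, i₀, ?_⟩
    · have := hle i
      simp only [avgUp_apply, Pi.sub_apply]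
      omega
    · simp only [avgUp_apply, Pi.sub_apply]
      omega
  set w := x + unitStep (q + 1) 1 x (avgUp x y) with hw_def
  have hw : w ∈ S := ih _ hu hux
  have hw_apply (i : Fin n) : w i =
      x i + if y i - x i = 2 * q + 1 then 1 else if y i - x i ≤ -2 then -1 else 0 := by
    have := hle i
    simp only [hw_def, unitStep, Pi.add_apply, avgUp_apply]
    split_ifs <;> omega
  have hwy : 2 ≤ linf (w - y) := by
    refine (le_linf_iff two_pos).2 ⟨i₀, ?_⟩
    rw [Pi.sub_apply, hw_apply, if_pos hi₀]
    omega
  have hv : avgDown w y ∈ S := (hS hw hy hwy).2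
  have hvx : linf (avgDown w y - x) = q + 1 := by
    refine (linf_eq_iff q.succ_pos).2 ⟨fun i => ?_, i₀, ?_⟩
    · have := hle i
      simp only [avgDown_apply, Pi.sub_apply, hw_apply]
      split_ifs <;> omega
    · rw [Pi.sub_apply, avgDown_apply, hw_apply, if_pos hi₀]
      omega
  have hstep : unitStep (q + 1) 1 x (avgDown w y) = unitStep (2 * q + 1) 1 x y := by
    funext i
    have := hle i
    simp only [unitStep, avgDown_apply, hw_apply]
    split_ifs <;> omega
  exact hstep ▸ ih _ hv hvx

theorem add_unitStep_one_mem (hS : DMCSet S) (hm : 1 ≤ m) (hx : x ∈ S) (hy : y ∈ S)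
    (hxy : linf (y - x) = m) : x + unitStep m 1 x y ∈ S := by
  induction m using Nat.strong_induction_on generalizing y with
  | _ m ih =>
  obtain rfl | hm2 : m = 1 ∨ 2 ≤ m := by omega
  · rwa [unitStep.add_eq hxy]
  by_cases hround : Even m ∨ ∀ i, y i - x i ≠ m
  · have hmid : avgDown x y ∈ S := (hS hx hy (by rwa [linf_sub_comm, hxy])).2
    have := ih ((m + 1) / 2) (by omega) (by omega) hmid (linf_avgDown_sub hround hm hxy)
    rwa [unitStep.avgDown_right hround hxy] at this
  · push Not at hround
    obtain ⟨hodd, i₀, hi₀⟩ := hround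
    obtain ⟨q, rfl⟩ := Nat.not_even_iff_odd.1 hodd
    exact hS.add_unitStep_one_mem_of_odd (by omega)
      (fun v hv => ih (q + 1) (by omega) (by omega) hv) hx hy hxy (by exact_mod_cast hi₀)

theorem sub_unitStep_last_mem (hS : DMCSet S) (hm : 1 ≤ m) (hx : x ∈ S) (hy : y ∈ S)
    (hxy : linf (y - x) = m) : y - unitStep m m x y ∈ S := by
  have := hS.add_unitStep_one_mem hm hy hx (by rwa [linf_sub_comm])
  rwa [unitStep.swap (Nat.add_comm 1 m), ← sub_eq_add_neg] at this

end DMCSet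

theorem GloballyDMC.locallyDMC {n : ℕ} {f : (Fin n → ℤ) → WithTop ℝ} (hf : GloballyDMC f) :
    LocallyDMC f := by
  refine ⟨fun x hx y hy hxy => ?_, fun x y hxy => hf x y hxy.ge⟩
  exact WithTop.add_ne_top.1 (ne_top_of_le_ne_top (WithTop.add_ne_top.2 ⟨hx, hy⟩) (hf x y hxy))

namespace LocallyDMC

variable {n m j : ℕ} {f : (Fin n → ℤ) → WithTop ℝ} {x y : Fin n → ℤ}

theorem sub_add_sub_le {u v : Fin n → ℤ} (hf : LocallyDMC f) (huv : u ≤ v) (hvu : v ≤ u + 1)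
    (h2 : linf (u + v) = 2) (y : Fin n → ℤ) :
    f (y - u) + f (y - v) ≤ f (y - v - u) + f y := by
  have hdist : linf (y - v - u - y) = 2 := by
    rw [linf_sub_comm, ← h2]
    congr 1
    abel
  simpa only [DMCPair, avgUp_sub_sub_self y huv hvu, avgDown_sub_sub_self y huv hvu] using
    hf.2 _ _ hdist

theorem parallelogram_of_sub_last (hf : LocallyDMC f) (hj : 1 ≤ j) (hjm : j ≤ m)
    (hx : x ∈ effDom f) (hxy : linf (y - x) = m + 1)
    (hlast : y - unitStep (m + 1) (m + 1) x y ∈ effDom f)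
    (hpar : f (x + unitStep (m + 1) j x y) +
        f (y - unitStep (m + 1) (m + 1) x y - unitStep (m + 1) j x y) ≤
      f x + f (y - unitStep (m + 1) (m + 1) x y)) :
    f (x + unitStep (m + 1) j x y) + f (y - unitStep (m + 1) j x y) ≤ f x + f y := by
  set s := unitStep (m + 1) j x y
  set l := unitStep (m + 1) (m + 1) x y
  have hshort : f (y - s) + f (y - l) ≤ f (y - l - s) + f y :=
    hf.sub_add_sub_le (unitStep.mono (by omega)) (unitStep.le_add_one hj le_rfl)
      (unitStep.linf_add hj (by omega) (by omega) le_rfl hxy) y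
  have hls : f (y - l - s) ≠ ⊤ :=
    (WithTop.add_ne_top.1 (ne_top_of_le_ne_top (WithTop.add_ne_top.2 ⟨hx, hlast⟩) hpar)).2
  refine WithTop.le_of_add_le_add_left (WithTop.add_ne_top.2 ⟨hlast, hls⟩) ?_
  calc f (y - l) + f (y - l - s) + (f (x + s) + f (y - s))
      = (f (x + s) + f (y - l - s)) + (f (y - s) + f (y - l)) := by ac_rfl
    _ ≤ (f x + f (y - l)) + (f (y - l - s) + f y) := add_le_add hpar hshort
    _ = f (y - l) + f (y - l - s) + (f x + f y) := by ac_rfl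

theorem parallelogram (hf : LocallyDMC f) (hj : 1 ≤ j) (hjm : j ≤ m) (hx : x ∈ effDom f)
    (hy : y ∈ effDom f) (hxy : linf (y - x) = m) :
    f (x + unitStep m j x y) + f (y - unitStep m j x y) ≤ f x + f y := by
  induction m generalizing j x y with
  | zero => omega
  | succ m ih =>
  have not_last {j x y} (hj : 1 ≤ j) (hjm : j ≤ m) (hx : x ∈ effDom f) (hy : y ∈ effDom f)
      (hxy : linf (y - x) = m + 1) :
      f (x + unitStep (m + 1) j x y) + f (y - unitStep (m + 1) j x y) ≤ f x + f y := by
    have hlast := hf.1.sub_unitStep_last_mem m.succ_pos hx hy hxy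
    have hpar := ih hj hjm hx hlast (unitStep.linf_sub_sub (by omega) m.succ_pos le_rfl hxy)
    rw [unitStep.sub_last hj hjm] at hpar
    exact hf.parallelogram_of_sub_last hj hjm hx hxy hlast hpar
  obtain hjm | rfl := Nat.le_or_eq_of_le_succ hjm
  · exact not_last hj hjm hx hy hxy
  obtain rfl | hm := m.eq_zero_or_pos
  · have hadd : x + unitStep 1 1 x y = y := unitStep.add_eq hxy
    rw [zero_add, hadd, sub_eq_of_eq_add hadd.symm, add_comm]
  · -- Reversing the roles of `x` and `y` turns the last step into the first one.
    have hswap := not_last le_rfl hm hy hx (by rwa [linf_sub_comm])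
    rw [unitStep.swap (Nat.add_comm 1 (m + 1)), ← sub_eq_add_neg, sub_neg_eq_add] at hswap
    rwa [add_comm (f (x + _)), add_comm (f x)]

end LocallyDMC

theorem exists_isMinOn_forall_le {α β γ : Type*} [LinearOrder β] [LinearOrder γ] {s : Set α}
    (hfin : s.Finite) (hne : s.Nonempty) (f : α → β) (g : α → γ) :
    ∃ y ∈ s, IsMinOn f s y ∧ ∀ z ∈ s, IsMinOn f s z → g y ≤ g z := by
  obtain ⟨y, ⟨hy, hymin⟩, hyg⟩ := Set.exists_min_image {y ∈ s | IsMinOn f s y} g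
    (hfin.subset fun _ hy => hy.1) (Set.exists_min_image s f hfin hne)
  exact ⟨y, hy, hymin, fun z hz hzmin => hyg z ⟨hz, hzmin⟩⟩

theorem two_neighborhood_descent_step_general {n : ℕ} {f : (Fin n → ℤ) → WithTop ℝ}
    (hf : LocallyDMC f) {a b a' b' x' : Fin n → ℤ} (ha : a' ∈ Set.Icc (a - 1) a)
    (hb : b' ∈ Set.Icc b (b + 1)) (hx' : x' ∈ Set.Icc a b) (hdom : x' ∈ effDom f)
    (hmin : IsMinOn f (Set.Icc a b) x') :
    ∃ x'' ∈ Set.Icc a' b', IsMinOn f (Set.Icc a' b') x'' ∧ linf (x'' - x') ≤ 2 := by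
  have hx'_mem : x' ∈ Set.Icc a' b' := Set.Icc_subset_Icc ha.2 hb.1 hx'
  obtain ⟨y, hy, hymin, hnear⟩ :=
    exists_isMinOn_forall_le (Set.finite_Icc a' b') ⟨x', hx'_mem⟩ f fun y => linf (y - x')
  refine ⟨y, hy, hymin, ?_⟩
  by_contra! hfar
  obtain ⟨m, hm⟩ := Nat.exists_eq_add_one_of_ne_zero (by omega : linf (y - x') ≠ 0)
  set s := unitStep (m + 1) 2 x' y
  have hx's : f x' ≤ f (x' + s) :=
    hmin (unitStep.add_two_mem_Icc (by omega) hx' (Set.Icc_subset_Icc ha.1 hb.2 hy))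
  have hys : y - s ∈ Set.Icc a' b' :=
    Set.uIcc_subset_Icc hx'_mem hy (unitStep.sub_mem_uIcc one_le_two (by omega))
  have hydom : y ∈ effDom f := ne_top_of_le_ne_top hdom (hymin hx'_mem)
  have hpar : f (x' + s) + f (y - s) ≤ f x' + f y :=
    hf.parallelogram one_le_two (by omega) hdom hydom hm
  have hle : f (y - s) ≤ f y :=
    WithTop.le_of_add_le_add_left hdom ((add_le_add_left hx's _).trans hpar)
  have hcloser : linf (y - s - x') = m :=
    unitStep.linf_sub_sub (by omega) one_le_two (by omega) hm
  have := hnear _ hys fun z hz => hle.trans (hymin hz)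
  omega

/-- 2-neighborhood steepest descent step: for a (globally or locally) discrete
midpoint convex function with a nonempty set of minimizers, with
`L = min{‖x − x⁰‖∞ : x ∈ argmin f}` and `S_k` the ℓ∞-ball of radius `k`
around `x⁰`, every minimizer of `f` over `S_{k−1}` (for `3 ≤ k ≤ L`) is at
ℓ∞-distance at most 2 from some minimizer of `f` over `S_k`. -/
theorem two_neighborhood_descent_step {n : ℕ} (f : (Fin n → ℤ) → WithTop ℝ)
    (hdmc : GloballyDMC f ∨ LocallyDMC f)
    (argmin : Set (Fin n → ℤ)) (hargmin : argmin = {x | ∀ z, f x ≤ f z})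
    (hne : argmin.Nonempty)
    (x0 : Fin n → ℤ) (hx0dom : x0 ∈ effDom f) (hx0 : x0 ∉ argmin)
    (L : ℕ) (hL : L = sInf ((fun x => linf (x - x0)) '' argmin))
    (S : ℕ → Set (Fin n → ℤ))
    (hS : ∀ k, S k = {x : Fin n → ℤ | linf (x - x0) ≤ k})
    (k : ℕ) (hk3 : 3 ≤ k) (hkL : k ≤ L)
    (x' : Fin n → ℤ) (hx' : x' ∈ S (k - 1) ∧ ∀ z ∈ S (k - 1), f x' ≤ f z) :
    ∃ x'' : Fin n → ℤ, x'' ∈ S k ∧ (∀ z ∈ S k, f x'' ≤ f z) ∧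
      linf (x'' - x') ≤ 2 := by
  obtain ⟨k, rfl⟩ := Nat.exists_eq_add_one_of_ne_zero (by omega : k ≠ 0)
  simp only [hS, setOf_linf_sub_le, Nat.add_sub_cancel, Nat.cast_add_one, ← sub_sub,
    ← add_assoc] at hx' ⊢
  have hk : (0 : Fin n → ℤ) ≤ k := Nat.cast_nonneg k
  have hdom : x' ∈ effDom f := ne_top_of_le_ne_top hx0dom (hx'.2 x0 (by simp [hk]))
  exact two_neighborhood_descent_step_general (hdmc.elim GloballyDMC.locallyDMC id)
    (by simp) (by simp) hx'.1 hdom hx'.2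
end

section
/- For n = 2, let Q be a 2×2 real symmetric matrix with entries q₁₁, q₁₂ = q₂₁, q₂₂, and let f : ℤ² → ℝ be f(x) = xᵀQx. Then f is locally discrete midpoint convex if and only if q₁₁ ≥ |q₁₂| and q₂₂ ≥ |q₁₂|; and f is globally discrete midpoint convex if and only if q₁₁ ≥ |q₁₂|, q₂₂ ≥ |q₁₂|, and q₁₁ + q₂₂ ≥ (5/2)·q₁₂. -/
open Matrix Classical

/-- The real cast of an integer vector. -/
def castVec {n : ℕ} (z : Fin n → ℤ) : Fin n → ℝ := fun i => (z i : ℝ)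

/-- The quadratic function `f(x) = xᵀ Q x` on `ℤⁿ`. -/
def quadFn {n : ℕ} (Q : Matrix (Fin n) (Fin n) ℝ) (x : Fin n → ℤ) : ℝ :=
  castVec x ⬝ᵥ Q.mulVec (castVec x)

/-- The real-valued function `f` satisfies discrete midpoint convexity for the
pair `(x, y)`. -/
def DMCPairR {n : ℕ} (f : (Fin n → ℤ) → ℝ) (x y : Fin n → ℤ) : Prop :=
  f (avgUp x y) + f (avgDown x y) ≤ f x + f y

/-- A real-valued `f` is globally discrete midpoint convex (its effective
domain is all of `ℤⁿ`, which is trivially a discrete midpoint convex set). -/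
def GloballyDMCR {n : ℕ} (f : (Fin n → ℤ) → ℝ) : Prop :=
  ∀ x y : Fin n → ℤ, 2 ≤ linf (x - y) → DMCPairR f x y

/-- A real-valued `f` is locally discrete midpoint convex (its effective
domain is all of `ℤⁿ`, which is trivially a discrete midpoint convex set). -/
def LocallyDMCR {n : ℕ} (f : (Fin n → ℤ) → ℝ) : Prop :=
  ∀ x y : Fin n → ℤ, linf (x - y) = 2 → DMCPairR f x y

/-- The characteristic real vector of the set of indices where `z` is odd. -/
noncomputable def oddChar {n : ℕ} (z : Fin n → ℤ) : Fin n → ℝ :=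
  fun i => if Odd (z i) then 1 else 0

/-!
Since `⌈(x+y)/2⌉` and `⌊(x+y)/2⌋` have sum `x + y` and their difference is the parity vector of
`x - y`, the parallelogram law turns the midpoint inequality for `f(x) = xᵀQx` at `(x, y)` into
`f(e) ≤ f(z)`, where `z = x - y` and `e` is the parity vector of `z`.

For `n = 2` write `f(p, q) = a p² + 2b p q + c q²`. Then
`f = (a - |b|) p² + (c - |b|) q² + |b| (p ± q)²`, with the sign of `b`, and replacing `(p, q)` by
its parity vector increases none of these squares, except `(p + q)²` when `p = -q` is odd. On such
differences, for `b ≥ 0`, the inequality reads `(a + c) (p² - 1) ≥ 2b (p² + 1)`, which for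
`|p| ≥ 3` is tightest at `|p| = 3`, where it is `a + c ≥ 5b/2`; such differences never have
`‖z‖∞ = 2`. The conditions are necessary by `z = (2, ±1), (±1, 2)` and `z = (3, -3)`.
-/

lemma castVec_add {n : ℕ} (x y : Fin n → ℤ) : castVec (x + y) = castVec x + castVec y :=
  funext fun _ => Int.cast_add _ _

lemma castVec_sub {n : ℕ} (x y : Fin n → ℤ) : castVec (x - y) = castVec x - castVec y :=
  funext fun _ => Int.cast_sub _ _

lemma castVec_single {n : ℕ} (i : Fin n) (p : ℤ) :
    castVec (Pi.single i p) = Pi.single i (p : ℝ) :=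
  funext (Pi.apply_single (fun _ => ((↑) : ℤ → ℝ)) (fun _ => Int.cast_zero) i p)

lemma oddChar_eq_castVec {n : ℕ} (z : Fin n → ℤ) : oddChar z = castVec fun i => z i % 2 := by
  ext i
  obtain h | h := Int.emod_two_eq_zero_or_one (z i) <;> simp [oddChar, castVec, Int.odd_iff, h]

lemma floor_intCast_div_two (m : ℤ) : ⌊(m : ℚ) / 2⌋ = m / 2 :=
  mod_cast Rat.floor_intCast_div_natCast m 2

lemma ceil_intCast_div_two (m : ℤ) : ⌈(m : ℚ) / 2⌉ = -(-m / 2) :=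
  mod_cast Rat.ceil_intCast_div_natCast m 2

lemma avgUp_add_avgDown {n : ℕ} (x y : Fin n → ℤ) : avgUp x y + avgDown x y = x + y := by
  ext i
  simp only [Pi.add_apply, avgUp, avgDown, ← Int.cast_add, ceil_intCast_div_two,
    floor_intCast_div_two]
  omega

lemma castVec_avgUp_sub_avgDown {n : ℕ} (x y : Fin n → ℤ) :
    castVec (avgUp x y - avgDown x y) = oddChar (x - y) := by
  rw [oddChar_eq_castVec]
  congr 1
  ext i
  simp only [Pi.sub_apply, avgUp, avgDown, ← Int.cast_add, ceil_intCast_div_two,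
    floor_intCast_div_two]
  omega

lemma quadFn_add_add_quadFn_sub {n : ℕ} (Q : Matrix (Fin n) (Fin n) ℝ) (x y : Fin n → ℤ) :
    quadFn Q (x + y) + quadFn Q (x - y) = 2 * (quadFn Q x + quadFn Q y) := by
  simp only [quadFn, castVec_add, castVec_sub, mulVec_add, mulVec_sub, add_dotProduct,
    sub_dotProduct, dotProduct_add, dotProduct_sub]
  ring

/-- The excess of `xᵀQx` at `z` over its value at the parity vector of `z`. Up to a factor of two
it is the slack in the discrete midpoint convexity inequality of a pair with difference `z`. -/
noncomputable def parityGap {n : ℕ} (Q : Matrix (Fin n) (Fin n) ℝ) (z : Fin n → ℤ) : ℝ :=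
  quadFn Q z - oddChar z ⬝ᵥ Q *ᵥ oddChar z

lemma dmcPairR_quadFn_iff {n : ℕ} (Q : Matrix (Fin n) (Fin n) ℝ) (x y : Fin n → ℤ) :
    DMCPairR (quadFn Q) x y ↔ 0 ≤ parityGap Q (x - y) := by
  have hxy := quadFn_add_add_quadFn_sub Q x y
  have hmid := quadFn_add_add_quadFn_sub Q (avgUp x y) (avgDown x y)
  have hodd : quadFn Q (avgUp x y - avgDown x y) = oddChar (x - y) ⬝ᵥ Q *ᵥ oddChar (x - y) := by
    rw [quadFn, castVec_avgUp_sub_avgDown]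
  rw [avgUp_add_avgDown, hodd] at hmid
  rw [DMCPairR, parityGap]
  constructor <;> intro h <;> linarith

lemma locallyDMCR_quadFn_iff {n : ℕ} (Q : Matrix (Fin n) (Fin n) ℝ) :
    LocallyDMCR (quadFn Q) ↔ ∀ z, linf z = 2 → 0 ≤ parityGap Q z := by
  simp only [LocallyDMCR, dmcPairR_quadFn_iff]
  exact ⟨fun h z hz => by simpa using h z 0 (by simpa using hz), fun h x y => h (x - y)⟩

lemma globallyDMCR_quadFn_iff {n : ℕ} (Q : Matrix (Fin n) (Fin n) ℝ) :
    GloballyDMCR (quadFn Q) ↔ ∀ z, 2 ≤ linf z → 0 ≤ parityGap Q z := by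
  simp only [GloballyDMCR, dmcPairR_quadFn_iff]
  exact ⟨fun h z hz => by simpa using h z 0 (by simpa using hz), fun h x y => h (x - y)⟩

lemma GloballyDMCR.locallyDMCR {n : ℕ} {f : (Fin n → ℤ) → ℝ} (h : GloballyDMCR f) :
    LocallyDMCR f :=
  fun x y hxy => h x y hxy.ge

lemma natAbs_le_linf {n : ℕ} (z : Fin n → ℤ) (i : Fin n) : (z i).natAbs ≤ linf z :=
  Finset.le_sup (f := fun k => (z k).natAbs) (Finset.mem_univ i)

lemma linf_single_add_single {n : ℕ} {i j : Fin n} (hij : i ≠ j) (p q : ℤ) :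
    linf (Pi.single i p + Pi.single j q) = max p.natAbs q.natAbs := by
  apply le_antisymm
  · refine Finset.sup_le fun k _ => ?_
    obtain rfl | hki := eq_or_ne k i
    · simp [hij]
    · obtain rfl | hkj := eq_or_ne k j <;> simp [*]
  · apply max_le
    · have hi := natAbs_le_linf (Pi.single i p + Pi.single j q : Fin n → ℤ) i
      simpa [hij] using hi
    · have hj := natAbs_le_linf (Pi.single i p + Pi.single j q : Fin n → ℤ) j
      simpa [hij.symm] using hj

lemma emod_two_single_add_single {n : ℕ} {i j : Fin n} (hij : i ≠ j) (p q : ℤ) :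
    (fun k => (Pi.single i p + Pi.single j q : Fin n → ℤ) k % 2) =
      Pi.single i (p % 2) + Pi.single j (q % 2) := by
  ext k
  obtain rfl | hki := eq_or_ne k i
  · simp [hij]
  · obtain rfl | hkj := eq_or_ne k j <;> simp [*]

lemma quadFn_single_add_single {n : ℕ} (Q : Matrix (Fin n) (Fin n) ℝ) (i j : Fin n) (p q : ℤ) :
    quadFn Q (Pi.single i p + Pi.single j q) =
      Q i i * p ^ 2 + (Q i j + Q j i) * (p * q) + Q j j * q ^ 2 := by
  simp only [quadFn, castVec_add, castVec_single, mulVec_add, add_dotProduct, dotProduct_add,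
    single_dotProduct, mulVec_single, Pi.smul_apply, col_apply, MulOpposite.smul_eq_mul_unop,
    MulOpposite.unop_op]
  ring

lemma parityGap_single_add_single {n : ℕ} (Q : Matrix (Fin n) (Fin n) ℝ) {i j : Fin n}
    (hij : i ≠ j) (p q : ℤ) :
    parityGap Q (Pi.single i p + Pi.single j q) =
      Q i i * (p ^ 2 - (p % 2 : ℤ) ^ 2) +
        (Q i j + Q j i) * (p * q - (p % 2 : ℤ) * (q % 2 : ℤ)) +
        Q j j * (q ^ 2 - (q % 2 : ℤ) ^ 2) := by
  rw [parityGap, oddChar_eq_castVec, emod_two_single_add_single hij, ← quadFn,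
    quadFn_single_add_single, quadFn_single_add_single]
  ring

lemma abs_add_le_two_mul_diag_of_locallyDMCR {n : ℕ} {Q : Matrix (Fin n) (Fin n) ℝ}
    (h : LocallyDMCR (quadFn Q)) {i j : Fin n} (hij : i ≠ j) :
    |Q i j + Q j i| ≤ 2 * Q i i := by
  have hgap (q : ℤ) (hq : q.natAbs ≤ 2) :=
    (locallyDMCR_quadFn_iff Q).1 h (Pi.single i 2 + Pi.single j q)
      ((linf_single_add_single hij 2 q).trans (max_eq_left hq))
  have hadd := hgap 1 (by decide)
  have hsub := hgap (-1) (by decide)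
  rw [parityGap_single_add_single Q hij] at hadd hsub
  norm_num at hadd hsub
  exact abs_le.2 ⟨by linarith, by linarith⟩

lemma five_mul_add_le_four_mul_diag_add_diag_of_globallyDMCR {n : ℕ}
    {Q : Matrix (Fin n) (Fin n) ℝ} (h : GloballyDMCR (quadFn Q)) {i j : Fin n} (hij : i ≠ j) :
    5 * (Q i j + Q j i) ≤ 4 * (Q i i + Q j j) := by
  have hgap := (globallyDMCR_quadFn_iff Q).1 h (Pi.single i 3 + Pi.single j (-3))
    ((linf_single_add_single hij 3 (-3)).symm ▸ by decide)
  rw [parityGap_single_add_single Q hij] at hgap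
  norm_num at hgap
  linarith

lemma sq_emod_two_le_sq (p : ℤ) : (p % 2) ^ 2 ≤ p ^ 2 :=
  Int.natAbs_le_iff_sq_le.1 (by omega)

lemma sq_emod_two_sub_emod_two_le_sq_sub (p q : ℤ) : (p % 2 - q % 2) ^ 2 ≤ (p - q) ^ 2 :=
  Int.natAbs_le_iff_sq_le.1 (by omega)

lemma sq_emod_two_add_emod_two_le_sq_add {p q : ℤ} (h : Odd p → p + q ≠ 0) :
    (p % 2 + q % 2) ^ 2 ≤ (p + q) ^ 2 := by
  rw [Int.odd_iff] at h
  exact Int.natAbs_le_iff_sq_le.1 (by omega)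

section FinTwo

variable {Q : Matrix (Fin 2) (Fin 2) ℝ}

lemma eq_single_add_single_fin_two (z : Fin 2 → ℤ) :
    z = Pi.single 0 (z 0) + Pi.single 1 (z 1) := by
  ext k
  fin_cases k <;> simp

lemma linf_fin_two (z : Fin 2 → ℤ) : linf z = max (z 0).natAbs (z 1).natAbs := by
  conv_lhs => rw [eq_single_add_single_fin_two z]
  exact linf_single_add_single zero_ne_one _ _

lemma parityGap_fin_two (hQ : Q 1 0 = Q 0 1) (z : Fin 2 → ℤ) :
    parityGap Q z =
      Q 0 0 * (z 0 ^ 2 - (z 0 % 2 : ℤ) ^ 2) +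
        2 * Q 0 1 * (z 0 * z 1 - (z 0 % 2 : ℤ) * (z 1 % 2 : ℤ)) +
        Q 1 1 * (z 1 ^ 2 - (z 1 % 2 : ℤ) ^ 2) := by
  conv_lhs => rw [eq_single_add_single_fin_two z]
  rw [parityGap_single_add_single Q zero_ne_one, hQ, two_mul]

lemma parityGap_nonneg_of_nonpos (hQ : Q 1 0 = Q 0 1) (hb : Q 0 1 ≤ 0) (ha : -Q 0 1 ≤ Q 0 0)
    (hc : -Q 0 1 ≤ Q 1 1) (z : Fin 2 → ℤ) : 0 ≤ parityGap Q z := by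
  have hp : ((z 0 % 2 : ℤ) : ℝ) ^ 2 ≤ z 0 ^ 2 := mod_cast sq_emod_two_le_sq (z 0)
  have hq : ((z 1 % 2 : ℤ) : ℝ) ^ 2 ≤ z 1 ^ 2 := mod_cast sq_emod_two_le_sq (z 1)
  have hsub : ((z 0 % 2 : ℤ) - (z 1 % 2 : ℤ) : ℝ) ^ 2 ≤ (z 0 - z 1) ^ 2 :=
    mod_cast sq_emod_two_sub_emod_two_le_sq_sub (z 0) (z 1)
  rw [parityGap_fin_two hQ]
  linarith [mul_le_mul_of_nonneg_left hp (neg_le_iff_add_nonneg.1 ha),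
    mul_le_mul_of_nonneg_left hq (neg_le_iff_add_nonneg.1 hc),
    mul_le_mul_of_nonneg_left hsub (neg_nonneg.2 hb)]

lemma parityGap_nonneg_of_nonneg (hQ : Q 1 0 = Q 0 1) (hb : 0 ≤ Q 0 1) (ha : Q 0 1 ≤ Q 0 0)
    (hc : Q 0 1 ≤ Q 1 1) {z : Fin 2 → ℤ} (hz : Odd (z 0) → z 0 + z 1 ≠ 0) :
    0 ≤ parityGap Q z := by
  have hp : ((z 0 % 2 : ℤ) : ℝ) ^ 2 ≤ z 0 ^ 2 := mod_cast sq_emod_two_le_sq (z 0)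
  have hq : ((z 1 % 2 : ℤ) : ℝ) ^ 2 ≤ z 1 ^ 2 := mod_cast sq_emod_two_le_sq (z 1)
  have hadd : ((z 0 % 2 : ℤ) + (z 1 % 2 : ℤ) : ℝ) ^ 2 ≤ (z 0 + z 1) ^ 2 :=
    mod_cast sq_emod_two_add_emod_two_le_sq_add hz
  rw [parityGap_fin_two hQ]
  linarith [mul_le_mul_of_nonneg_left hp (sub_nonneg.2 ha),
    mul_le_mul_of_nonneg_left hq (sub_nonneg.2 hc), mul_le_mul_of_nonneg_left hadd hb]

lemma parityGap_nonneg_of_odd_antidiagonal (hQ : Q 1 0 = Q 0 1) (hb : 0 ≤ Q 0 1)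
    (hac : 5 / 2 * Q 0 1 ≤ Q 0 0 + Q 1 1) {z : Fin 2 → ℤ} (hodd : Odd (z 0))
    (hanti : z 0 + z 1 = 0) (hz : 2 ≤ linf z) : 0 ≤ parityGap Q z := by
  rw [Int.odd_iff] at hodd
  rw [linf_fin_two] at hz
  have hneg : z 1 = -z 0 := by omega
  have hmod : -z 0 % 2 = 1 := by omega
  have hnine : (9 : ℝ) ≤ (z 0 : ℝ) ^ 2 := by
    exact_mod_cast Int.natAbs_le_iff_sq_le.1 (show (3 : ℤ).natAbs ≤ (z 0).natAbs by omega)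
  calc
    0 ≤ (Q 0 0 + Q 1 1 - 5 / 2 * Q 0 1) * ((z 0 : ℝ) ^ 2 - 1) +
          Q 0 1 / 2 * ((z 0 : ℝ) ^ 2 - 9) :=
      add_nonneg (mul_nonneg (by linarith) (by linarith)) (mul_nonneg (by linarith) (by linarith))
    _ = parityGap Q z := by
      rw [parityGap_fin_two hQ, hneg, hodd, hmod]
      push_cast
      ring

lemma locallyDMCR_quadFn_of_abs_le (hQ : Q 1 0 = Q 0 1) (ha : |Q 0 1| ≤ Q 0 0)
    (hc : |Q 0 1| ≤ Q 1 1) : LocallyDMCR (quadFn Q) := by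
  refine (locallyDMCR_quadFn_iff Q).2 fun z hz => ?_
  obtain hb | hb := le_total (Q 0 1) 0
  · exact parityGap_nonneg_of_nonpos hQ hb ((neg_le_abs _).trans ha) ((neg_le_abs _).trans hc) z
  · refine parityGap_nonneg_of_nonneg hQ hb ((le_abs_self _).trans ha)
      ((le_abs_self _).trans hc) fun hodd hanti => ?_
    rw [linf_fin_two] at hz
    rw [Int.odd_iff] at hodd
    omega

lemma globallyDMCR_quadFn_of_abs_le_of_le_add (hQ : Q 1 0 = Q 0 1) (ha : |Q 0 1| ≤ Q 0 0)
    (hc : |Q 0 1| ≤ Q 1 1) (hac : 5 / 2 * Q 0 1 ≤ Q 0 0 + Q 1 1) : GloballyDMCR (quadFn Q) := by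
  refine (globallyDMCR_quadFn_iff Q).2 fun z hz => ?_
  obtain hb | hb := le_total (Q 0 1) 0
  · exact parityGap_nonneg_of_nonpos hQ hb ((neg_le_abs _).trans ha) ((neg_le_abs _).trans hc) z
  · by_cases hanti : Odd (z 0) ∧ z 0 + z 1 = 0
    · exact parityGap_nonneg_of_odd_antidiagonal hQ hb hac hanti.1 hanti.2 hz
    · exact parityGap_nonneg_of_nonneg hQ hb ((le_abs_self _).trans ha)
        ((le_abs_self _).trans hc) (not_and.1 hanti)

lemma abs_le_diag_of_locallyDMCR (hQ : Q 1 0 = Q 0 1) (h : LocallyDMCR (quadFn Q)) :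
    |Q 0 1| ≤ Q 0 0 ∧ |Q 0 1| ≤ Q 1 1 := by
  have h₀ := abs_add_le_two_mul_diag_of_locallyDMCR h (zero_ne_one (α := Fin 2))
  have h₁ := abs_add_le_two_mul_diag_of_locallyDMCR h (one_ne_zero (α := Fin 2))
  rw [hQ, ← two_mul, abs_mul, abs_two] at h₀ h₁
  exact ⟨by linarith, by linarith⟩

end FinTwo

/-- For `n = 2` and a symmetric matrix `Q`, the quadratic `f(x) = xᵀQx` is
locally discrete midpoint convex iff `q₁₁ ≥ |q₁₂|` and `q₂₂ ≥ |q₁₂|`, and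
globally discrete midpoint convex iff in addition `q₁₁ + q₂₂ ≥ (5/2)q₁₂`. -/
theorem quad_dmc_dim2 (Q : Matrix (Fin 2) (Fin 2) ℝ) (hQ : Q 1 0 = Q 0 1) :
    (LocallyDMCR (quadFn Q) ↔ |Q 0 1| ≤ Q 0 0 ∧ |Q 0 1| ≤ Q 1 1) ∧
    (GloballyDMCR (quadFn Q) ↔
      |Q 0 1| ≤ Q 0 0 ∧ |Q 0 1| ≤ Q 1 1 ∧ (5 / 2) * Q 0 1 ≤ Q 0 0 + Q 1 1) := by
  refine ⟨⟨abs_le_diag_of_locallyDMCR hQ, fun ⟨ha, hc⟩ => locallyDMCR_quadFn_of_abs_le hQ ha hc⟩,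
    fun h => ?_, fun ⟨ha, hc, hac⟩ => globallyDMCR_quadFn_of_abs_le_of_le_add hQ ha hc hac⟩
  obtain ⟨ha, hc⟩ := abs_le_diag_of_locallyDMCR hQ h.locallyDMCR
  have hac := five_mul_add_le_four_mul_diag_add_diag_of_globallyDMCR h (zero_ne_one (α := Fin 2))
  rw [hQ] at hac
  exact ⟨ha, hc, by linarith⟩
end
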